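/- For every real J ≥ 0, all eigenvalues of the symmetric real matrix M = −I + (J/2^(K+1)) A are strictly negative if and only if J < 2. Hence the incoherent state loses stability precisely at the critical coupling J_c = 2, independently of the even rank parameter K. -/

import Mathlib

/-- The value ±1 associated to a Boolean sign. -/
noncomputable def sgn (b : Bool) : ℝ := if b then 1 else -1

/-- The `2^K × 2^K` matrix with rows and columns indexed by sign vectors
`u, v ∈ {−1,1}^K` (encoded as `Fin K → Bool`), with entries
`A_{u,v} = Σ_{m=1}^K (−1)^m u_m v_m`. -/
noncomputable def volcanoA (K : ℕ) : Matrix (Fin K → Bool) (Fin K → Bool) ℝ :=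
  Matrix.of fun u v => ∑ m : Fin K, (-1 : ℝ) ^ ((m : ℕ) + 1) * sgn (u m) * sgn (v m)

/-!
The coordinate functions on the sign cube are pairwise orthogonal with squared norm `2 ^ K`, so
`A = S D Sᵀ` with `Sᵀ S = 2 ^ K • 1` and `D` the diagonal matrix of alternating signs. Since `X Y`
and `Y X` have the same nonzero eigenvalues, those of `c • A` are the nonzero ones among
`± c 2 ^ K`. For `c = J / 2 ^ (K + 1)` these are `± J / 2`, both signs occurring once `2 ≤ K`.
-/

section Spectrum

open scoped Pointwise in
theorem forall_mem_spectrum_neg_one_add_neg_iff {R A : Type*} [CommRing R] [PartialOrder R]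
    [IsOrderedAddMonoid R] [Ring A] [Algebra R A] (a : A) :
    (∀ μ ∈ spectrum R (-1 + a), μ < 0) ↔ ∀ k ∈ spectrum R a, k < 1 := by
  have shift : spectrum R (-1 + a) = (-1 : R) +ᵥ spectrum R a := by
    rw [spectrum.vadd_eq, map_neg, map_one]
  simp only [shift, Set.mem_vadd_set, forall_exists_index, and_imp, forall_apply_eq_imp_iff₂,
    vadd_eq_add, neg_add_lt_iff_lt_add, add_zero]

variable {F m n : Type*} [Field F] [Fintype m] [DecidableEq m] [Fintype n] [DecidableEq n] {k : F}

theorem mem_spectrum_matrix_mul_comm (hk : k ≠ 0) (B : Matrix m n F) (C : Matrix n m F) :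
    k ∈ spectrum F (B * C) ↔ k ∈ spectrum F (C * B) := by
  have h := congrArg (Polynomial.eval k) (Matrix.charpoly_mul_comm' B C)
  simp only [Polynomial.eval_mul, Polynomial.eval_pow, Polynomial.eval_X] at h
  rw [Matrix.mem_spectrum_iff_isRoot_charpoly, Matrix.mem_spectrum_iff_isRoot_charpoly,
    Polynomial.IsRoot, Polynomial.IsRoot, ← mul_eq_zero_iff_left (pow_ne_zero _ hk), h,
    mul_eq_zero_iff_left (pow_ne_zero _ hk)]

theorem mem_spectrum_mul_diagonal_mul_iff (hk : k ≠ 0) {B : Matrix m n F} {C : Matrix n m F}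
    {a : F} (hCB : C * B = a • 1) (d : n → F) :
    k ∈ spectrum F (B * Matrix.diagonal d * C) ↔ ∃ i, a * d i = k := by
  have hprod : C * (B * Matrix.diagonal d) = Matrix.diagonal (a • d) := by
    rw [← Matrix.mul_assoc, hCB, Matrix.smul_mul, Matrix.one_mul, Matrix.diagonal_smul]
  rw [mem_spectrum_matrix_mul_comm hk, hprod, spectrum_diagonal]
  rfl

end Spectrum

section SignMatrix

open scoped Matrix

theorem sgn_mul_self (b : Bool) : sgn b * sgn b = 1 := by
  cases b <;> simp [sgn]

theorem sgn_not (b : Bool) : sgn (!b) = -sgn b := by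
  cases b <;> simp [sgn]

/-- The matrix whose rows are all the sign vectors indexed by `ι`; its columns are the coordinate
functions on the sign cube, and `volcanoA` is diagonal in them. -/
noncomputable def signMatrix (ι : Type*) : Matrix (ι → Bool) ι ℝ :=
  Matrix.of fun v i => sgn (v i)

variable {ι : Type*} [Fintype ι] [DecidableEq ι]

theorem sum_sgn_mul_sgn_of_ne {i j : ι} (hij : i ≠ j) :
    ∑ v : ι → Bool, sgn (v i) * sgn (v j) = 0 := by
  -- Flipping the `i`-th sign reverses the sign of each summand.
  refine Finset.sum_involution (fun v _ => Function.update v i (!v i)) ?_ ?_ ?_ ?_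
  · intro v _
    rw [Function.update_self, Function.update_of_ne hij.symm, sgn_not, neg_mul, add_neg_cancel]
  · intro v _ _ hfix
    simpa using congrFun hfix i
  · exact fun v _ => Finset.mem_univ _
  · intro v _
    simp

theorem signMatrix_transpose_mul_self :
    (signMatrix ι)ᵀ * signMatrix ι = (2 : ℝ) ^ Fintype.card ι • 1 := by
  ext i j
  rw [Matrix.mul_apply]
  obtain rfl | hij := eq_or_ne i j
  · simp [signMatrix, sgn_mul_self]
  · simpa [signMatrix, hij] using sum_sgn_mul_sgn_of_ne hij

end SignMatrix

section Volcano

open scoped Matrix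

theorem volcanoA_eq_signMatrix_mul_diagonal_mul (K : ℕ) :
    volcanoA K = signMatrix (Fin K) * Matrix.diagonal (fun m : Fin K => (-1 : ℝ) ^ ((m : ℕ) + 1)) *
      (signMatrix (Fin K))ᵀ := by
  ext u v
  rw [volcanoA, Matrix.of_apply, Matrix.mul_apply]
  refine Finset.sum_congr rfl fun m _ => ?_
  rw [Matrix.mul_diagonal]
  simp only [signMatrix, Matrix.of_apply, Matrix.transpose_apply]
  ring

theorem mem_spectrum_smul_volcanoA_iff {K : ℕ} {c k : ℝ} (hk : k ≠ 0) :
    k ∈ spectrum ℝ (c • volcanoA K) ↔ ∃ m : Fin K, 2 ^ K * (c * (-1) ^ ((m : ℕ) + 1)) = k := by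
  have hfactor : c • volcanoA K = signMatrix (Fin K) *
      Matrix.diagonal (c • fun m : Fin K => (-1 : ℝ) ^ ((m : ℕ) + 1)) *
        (signMatrix (Fin K))ᵀ := by
    rw [volcanoA_eq_signMatrix_mul_diagonal_mul, Matrix.diagonal_smul, Matrix.mul_smul,
      Matrix.smul_mul]
  rw [hfactor, mem_spectrum_mul_diagonal_mul_iff hk signMatrix_transpose_mul_self, Fintype.card_fin]
  rfl

theorem forall_mem_spectrum_smul_volcanoA_lt_one_iff {K : ℕ} {c : ℝ} :
    (∀ k ∈ spectrum ℝ (c • volcanoA K), k < 1) ↔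
      ∀ m : Fin K, 2 ^ K * (c * (-1) ^ ((m : ℕ) + 1)) < 1 := by
  constructor
  · intro h m
    obtain hzero | hne := eq_or_ne (2 ^ K * (c * (-1) ^ ((m : ℕ) + 1))) 0
    · exact hzero.trans_lt one_pos
    · exact h _ ((mem_spectrum_smul_volcanoA_iff hne).2 ⟨m, rfl⟩)
  · intro h k hk
    obtain rfl | hne := eq_or_ne k 0
    · exact one_pos
    · obtain ⟨m, rfl⟩ := (mem_spectrum_smul_volcanoA_iff hne).1 hk
      exact h m

end Volcano

theorem forall_fin_mul_neg_one_pow_lt_iff_abs_lt {R : Type*} [Ring R] [LinearOrder R]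
    {K : ℕ} (hK : 2 ≤ K) (x b : R) :
    (∀ m : Fin K, x * (-1) ^ ((m : ℕ) + 1) < b) ↔ |x| < b := by
  rw [abs_eq_max_neg, max_lt_iff]
  constructor
  · intro h
    have hpos : x < b := by simpa using h ⟨1, hK⟩
    have hneg : -x < b := by simpa using h ⟨0, two_pos.trans_le hK⟩
    exact ⟨hpos, hneg⟩
  · rintro ⟨hpos, hneg⟩ m
    obtain hsign | hsign := neg_one_pow_eq_or R ((m : ℕ) + 1)
    · rwa [hsign, mul_one]
    · rwa [hsign, mul_neg_one]

theorem stmt7_general (K : ℕ) (hK : 2 ≤ K) (J : ℝ) :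
    (∀ μ ∈ spectrum ℝ
        (-(1 : Matrix (Fin K → Bool) (Fin K → Bool) ℝ) + (J / 2 ^ (K + 1)) • volcanoA K),
      μ < 0) ↔ |J| < 2 := by
  have hscale (s : ℝ) : 2 ^ K * (J / 2 ^ (K + 1) * s) = J / 2 * s := by
    rw [pow_succ]
    field_simp
  simp only [forall_mem_spectrum_neg_one_add_neg_iff, forall_mem_spectrum_smul_volcanoA_lt_one_iff,
    hscale]
  rw [forall_fin_mul_neg_one_pow_lt_iff_abs_lt hK, abs_div, abs_two, div_lt_one two_pos]

/-- For every real `J ≥ 0`, all (real) eigenvalues of the symmetric matrix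
`M = −I + (J/2^(K+1)) A` are strictly negative if and only if `J < 2`: the
incoherent state loses stability precisely at `J_c = 2`, independently of the
even rank parameter `K`. -/
theorem stmt7 (K : ℕ) (hK : 0 < K) (hKeven : Even K) (J : ℝ) (hJ : 0 ≤ J) :
    (∀ μ ∈ spectrum ℝ
        (-(1 : Matrix (Fin K → Bool) (Fin K → Bool) ℝ) + (J / 2 ^ (K + 1)) • volcanoA K),
      μ < 0) ↔ J < 2 := by
  rw [stmt7_general K (by grind) J, abs_of_nonneg hJ]
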